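/- Let L be a finite distributive lattice with top 1 and bottom 0. Then: (i) B(L) has a least element c and every x ∈ B(L) has a complement ¬x ∈ B(L) satisfying x ∨ ¬x = 1 and x ∧ ¬x = c (so B(L) is a boolean lattice); (ii) for every a ∈ B(L) and every x with a ≤ x, the complement of x in the interval [a, 1] equals ¬x ∨ a, i.e., x ∨ (¬x ∨ a) = 1 and x ∧ (¬x ∨ a) = a. -/

import Mathlib

/-- A boolean element of a bounded lattice: the interval `[a, 1]` is a boolean
lattice, i.e. every `x ≥ a` has a complement in `[a, 1]`. -/
def BooleanElt {L : Type*} [Lattice L] [OrderTop L] (a : L) : Prop :=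
  ∀ x, a ≤ x → ∃ y, a ≤ y ∧ x ⊔ y = ⊤ ∧ x ⊓ y = a

theorem BooleanElt.inf_aux {L : Type*} [DistribLattice L] [OrderTop L] {a b : L}
    (ha : BooleanElt a) (hb : BooleanElt b) : BooleanElt (a ⊓ b) := by
  intro x hx
  obtain ⟨y, hy, hy1, hy2⟩ := ha (x ⊔ a) le_sup_right
  obtain ⟨z, hz, hz1, hz2⟩ := hb (x ⊔ b) le_sup_right
  rw [sup_assoc, sup_eq_right.2 hy] at hy1
  rw [sup_assoc, sup_eq_right.2 hz] at hz1
  refine ⟨y ⊓ z, inf_le_inf hy hz, by rw [sup_inf_left, hy1, hz1, inf_top_eq], ?_⟩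
  apply le_antisymm
  · apply le_inf
    · rw [← hy2]
      exact inf_le_inf le_sup_left inf_le_left
    · rw [← hz2]
      exact inf_le_inf le_sup_left inf_le_right
  · exact le_inf hx (inf_le_inf hy hz)

theorem BooleanElt.mono_aux {L : Type*} [DistribLattice L] [OrderTop L] {a b : L}
    (ha : BooleanElt a) (hab : a ≤ b) : BooleanElt b := by
  intro x hx
  obtain ⟨y, hy, hy1, hy2⟩ := ha x (hab.trans hx)
  refine ⟨y ⊔ b, le_sup_right, by rw [← sup_assoc, hy1, top_sup_eq], ?_⟩
  rw [inf_sup_left, hy2, inf_eq_right.2 hx, sup_eq_right.2 hab]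

/-- in a finite distributive lattice, the boolean elements form a
boolean lattice: there is a least boolean element `c`, every boolean element has
a complement relative to `c` inside the boolean elements, and for `a` boolean
and `a ≤ x`, the complement of `x` in `[a, 1]` is `¬x ∨ a` where `¬x` is the
complement of `x` among the boolean elements. -/
theorem boolean_elements_of_finite_distrib_lattice {L : Type*} [DistribLattice L]
    [Fintype L] [BoundedOrder L] :
    ∃ c : L, BooleanElt c ∧ (∀ b, BooleanElt b → c ≤ b) ∧
      (∀ x, BooleanElt x → ∃ nx, BooleanElt nx ∧ x ⊔ nx = ⊤ ∧ x ⊓ nx = c) ∧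
      (∀ a x nx : L, BooleanElt a → a ≤ x → BooleanElt nx →
        x ⊔ nx = ⊤ → x ⊓ nx = c →
          x ⊔ (nx ⊔ a) = ⊤ ∧ x ⊓ (nx ⊔ a) = a) := by
  classical
  have hc : BooleanElt ((Finset.univ.filter (fun a : L => BooleanElt a)).inf id) := by
    apply Finset.inf_induction (p := fun a : L => BooleanElt a)
    · intro x hx
      exact ⟨⊤, le_rfl, sup_top_eq x, by rw [inf_top_eq]; exact top_le_iff.1 hx⟩
    · intro a ha b hb
      exact ha.inf_aux hb
    · intro b hb
      exact (Finset.mem_filter.1 hb).2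
  have hl : ∀ b : L, BooleanElt b →
      (Finset.univ.filter (fun a : L => BooleanElt a)).inf id ≤ b := by
    intro b hb
    exact Finset.inf_le (f := id) (Finset.mem_filter.2 ⟨Finset.mem_univ b, hb⟩)
  refine ⟨_, hc, hl, ?_, ?_⟩
  · intro x hx
    obtain ⟨y, hy, h1, h2⟩ := hc x (hl x hx)
    exact ⟨y, hc.mono_aux hy, h1, h2⟩
  · intro a x nx ha hax hnx h1 h2
    refine ⟨by rw [← sup_assoc, h1, top_sup_eq], ?_⟩
    rw [inf_sup_left, h2, inf_eq_right.2 hax, sup_eq_right.2 (hl a ha)]
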